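/- For every ε > 0 there exist a bounded linear operator T on a separable complex Hilbert space and a compact linear operator K with ‖K‖ < ε such that T is distributionally chaotic but T − K is not distributionally chaotic. In particular, distributional chaos is not preserved under compact perturbations of bounded linear operators. -/

import Mathlib

open Filter Topology MeasureTheory
open scoped Classical ENNReal

noncomputable def distFreq {X : Type*} [MetricSpace X] (f : X → X) (x y : X) (τ : ℝ) (n : ℕ) : ℝ :=
  (((Finset.range n).filter fun i => dist (f^[i] x) (f^[i] y) < τ).card : ℝ) / n

def DistributionallyChaoticPair {X : Type*} [MetricSpace X] (f : X → X) (x y : X) : Prop :=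
  (∀ τ : ℝ, 0 < τ → Filter.limsup (distFreq f x y τ) Filter.atTop = 1) ∧
  (∃ ε : ℝ, 0 < ε ∧ Filter.liminf (distFreq f x y ε) Filter.atTop = 0)

def DistributionallyChaotic {X : Type*} [MetricSpace X] (f : X → X) : Prop :=
  ∃ Λ : Set X, ¬Λ.Countable ∧
    ∀ x ∈ Λ, ∀ y ∈ Λ, x ≠ y → DistributionallyChaoticPair f x y

def LiYorkePair {X : Type*} [MetricSpace X] (f : X → X) (x y : X) : Prop :=
  0 < Filter.limsup (fun n => edist (f^[n] x) (f^[n] y)) Filter.atTop ∧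
  Filter.liminf (fun n => edist (f^[n] x) (f^[n] y)) Filter.atTop = 0

def LiYorkeChaotic {X : Type*} [MetricSpace X] (f : X → X) : Prop :=
  ∃ Γ : Set X, ¬Γ.Countable ∧ ∀ x ∈ Γ, ∀ y ∈ Γ, x ≠ y → LiYorkePair f x y

def NormUnimodal {X : Type*} [NormedAddCommGroup X] [NormedSpace ℂ X] (T : X →L[ℂ] X) : Prop :=
  ∃ r : ℝ, 1 < r ∧ ∀ m : ℕ, ∃ x : X, x ≠ 0 ∧
    Filter.Tendsto (fun k => ‖(T ^ k) x‖) Filter.atTop (nhds 0) ∧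
    ∀ i : ℕ, 1 ≤ i → i ≤ m → r ^ i * ‖x‖ ≤ ‖(T ^ i) x‖

/-! ### Frequencies -/

lemma distFreq_nonneg' {X : Type*} [MetricSpace X] (f : X → X) (x y : X) (τ : ℝ) (n : ℕ) :
    0 ≤ distFreq f x y τ n := by
  unfold distFreq; positivity

lemma distFreq_le_one' {X : Type*} [MetricSpace X] (f : X → X) (x y : X) (τ : ℝ) (n : ℕ) :
    distFreq f x y τ n ≤ 1 := by
  unfold distFreq
  apply div_le_one_of_le₀ _ (by positivity)
  have := Finset.card_filter_le (Finset.range n) (fun i => dist (f^[i] x) (f^[i] y) < τ)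
  rw [Finset.card_range] at this
  exact_mod_cast this

lemma limsup_eq_one_of_seq (u : ℕ → ℝ) (h1 : ∀ n, u n ≤ 1) (h0 : ∀ n, 0 ≤ u n)
    (N : ℕ → ℕ) (hN : Tendsto N atTop atTop) (h : Tendsto (fun k => u (N k)) atTop (𝓝 1)) :
    limsup u atTop = 1 := by
  have hb : IsBoundedUnder (· ≤ ·) atTop u := isBoundedUnder_of ⟨1, h1⟩
  have hb' : IsBoundedUnder (· ≥ ·) atTop u := isBoundedUnder_of ⟨0, h0⟩
  apply le_antisymm
  · exact limsup_le_of_le hb'.isCoboundedUnder_le (Eventually.of_forall h1)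
  · apply le_of_forall_lt
    intro c hc
    obtain ⟨d, hcd, hd⟩ := exists_between hc
    refine lt_of_lt_of_le hcd (le_limsup_of_frequently_le ?_ hb)
    have h2 : ∀ᶠ k in atTop, d ≤ u (N k) := (h.eventually (lt_mem_nhds hd)).mono fun _ h => h.le
    exact hN.frequently h2.frequently

lemma liminf_eq_zero_of_seq (u : ℕ → ℝ) (h1 : ∀ n, u n ≤ 1) (h0 : ∀ n, 0 ≤ u n)
    (N : ℕ → ℕ) (hN : Tendsto N atTop atTop) (h : Tendsto (fun k => u (N k)) atTop (𝓝 0)) :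
    liminf u atTop = 0 := by
  have hb : IsBoundedUnder (· ≤ ·) atTop u := isBoundedUnder_of ⟨1, h1⟩
  have hb' : IsBoundedUnder (· ≥ ·) atTop u := isBoundedUnder_of ⟨0, h0⟩
  apply le_antisymm
  · apply le_of_forall_gt
    intro c hc
    obtain ⟨d, hd, hcd⟩ := exists_between hc
    refine lt_of_le_of_lt (liminf_le_of_frequently_le ?_ hb') hcd
    have h2 : ∀ᶠ k in atTop, u (N k) ≤ d := (h.eventually (gt_mem_nhds hd)).mono fun _ h => h.le
    exact hN.frequently h2.frequently
  · exact le_liminf_of_le hb.isCoboundedUnder_ge (Eventually.of_forall h0)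

/-- If the property fails on `[a, (k+1) a)`, its frequency at `(k+1) a` is at most `1/(k+1)`. -/
lemma freq_le (P : ℕ → Prop) [DecidablePred P] (a k : ℕ) (ha : 0 < a)
    (h : ∀ i, a ≤ i → i < (k + 1) * a → ¬ P i) :
    ((((Finset.range ((k + 1) * a)).filter P).card : ℝ) / (((k + 1) * a : ℕ) : ℝ))
      ≤ 1 / ((k : ℝ) + 1) := by
  have hs : (Finset.range ((k + 1) * a)).filter P ⊆ Finset.range a := by
    intro i hi
    simp only [Finset.mem_filter, Finset.mem_range] at hi ⊢
    by_contra hia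
    exact h i (not_lt.mp hia) hi.1 hi.2
  have hc := Finset.card_le_card hs
  rw [Finset.card_range] at hc
  have hc' : (((Finset.range ((k + 1) * a)).filter P).card : ℝ) ≤ a := by exact_mod_cast hc
  have ha' : (0 : ℝ) < a := by exact_mod_cast ha
  push_cast
  rw [div_le_div_iff₀ (by positivity) (by positivity)]
  nlinarith

/-- If the property holds on `[a, (k+1) a)`, its frequency at `(k+1) a` is at least `1 - 1/(k+1)`. -/
lemma le_freq (P : ℕ → Prop) [DecidablePred P] (a k : ℕ) (ha : 0 < a)
    (h : ∀ i, a ≤ i → i < (k + 1) * a → P i) :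
    1 - 1 / ((k : ℝ) + 1) ≤
    ((((Finset.range ((k + 1) * a)).filter P).card : ℝ) / (((k + 1) * a : ℕ) : ℝ)) := by
  have h1 := freq_le (fun i => ¬ P i) a k ha (fun i h1 h2 h3 => h3 (h i h1 h2))
  have h2 := Finset.card_filter_add_card_filter_not (s := Finset.range ((k + 1) * a)) P
  rw [Finset.card_range] at h2
  have ha' : (0 : ℝ) < a := by exact_mod_cast ha
  have h3 : (((Finset.range ((k + 1) * a)).filter P).card : ℝ) / (((k + 1) * a : ℕ) : ℝ)
     + (((Finset.range ((k + 1) * a)).filter (fun i => ¬ P i)).card : ℝ)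
        / (((k + 1) * a : ℕ) : ℝ) = 1 := by
    rw [← add_div, div_eq_one_iff_eq (by push_cast; positivity)]
    exact_mod_cast h2
  linarith

lemma iterate_clm {H : Type*} [NormedAddCommGroup H] [NormedSpace ℂ H] (T : H →L[ℂ] H) (n : ℕ)
    (x : H) : (fun x => T x)^[n] x = (T ^ n) x := by
  induction n generalizing x with
  | zero => simp
  | succ n ih => rw [Function.iterate_succ_apply, ih, pow_succ]; rfl

/-- One distributionally irregular vector suffices. -/
lemma chaotic_of_vector {H : Type*} [NormedAddCommGroup H] [NormedSpace ℂ H] (T : H →L[ℂ] H)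
    (x : H) (η : ℝ) (hη : 0 < η) (a b : ℕ → ℕ) (ha : ∀ k, k < a k) (hb : ∀ k, k < b k)
    (hbig : ∀ k n, a k ≤ n → n < (k + 1) * a k → η ≤ ‖(T ^ n) x‖)
    (hsmall : ∀ k n, b k ≤ n → n < (k + 1) * b k → ‖(T ^ n) x‖ ≤ 2 / ((k : ℝ) + 1)) :
    DistributionallyChaotic (fun x => T x) := by
  have hx : x ≠ 0 := by
    rintro rfl
    have := hbig 1 (a 1) le_rfl (by have := ha 1; omega)
    simp at this
    linarith
  have htop : ∀ c : ℕ → ℕ, (∀ k, k < c k) → Tendsto (fun k => (k + 1) * c k) atTop atTop := by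
    intro c hc
    refine tendsto_atTop_mono (fun k => ?_) tendsto_id
    have := hc k
    simp only [id]
    nlinarith
  have hlim0 : Tendsto (fun k : ℕ => 1 / ((k : ℝ) + 1)) atTop (𝓝 0) :=
    tendsto_one_div_add_atTop_nhds_zero_nat
  refine ⟨Set.range (fun t : ℝ => (t : ℂ) • x), ?_, ?_⟩
  · intro hc
    have hinj : Function.Injective (fun t : ℝ => (t : ℂ) • x) := by
      intro s t hst
      have := smul_left_injective ℂ hx hst
      exact_mod_cast this
    have h1 : (Set.univ : Set ℝ).Countable := by
      rw [← Set.image_univ] at hc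
      exact Set.countable_of_injective_of_countable_image hinj.injOn hc
    exact Cardinal.not_countable_real h1
  · rintro _ ⟨s, rfl⟩ _ ⟨t, rfl⟩ hst
    have hst' : s ≠ t := by
      rintro rfl
      exact hst rfl
    have hpos : 0 < |s - t| := abs_pos.mpr (sub_ne_zero.mpr hst')
    have hd : ∀ i, dist ((fun x => T x)^[i] ((s : ℂ) • x)) ((fun x => T x)^[i] ((t : ℂ) • x))
        = |s - t| * ‖(T ^ i) x‖ := by
      intro i
      rw [iterate_clm, iterate_clm, dist_eq_norm, ← map_sub, ← sub_smul, map_smul, norm_smul,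
        ← Complex.ofReal_sub, Complex.norm_real, Real.norm_eq_abs]
    refine ⟨fun τ hτ => ?_, |s - t| * η, by positivity, ?_⟩
    · refine limsup_eq_one_of_seq _ (distFreq_le_one' _ _ _ _) (distFreq_nonneg' _ _ _ _)
        (fun k => (k + 1) * b k) (htop b hb) ?_
      have hl : Tendsto (fun k : ℕ => 1 - 1 / ((k : ℝ) + 1)) atTop (𝓝 1) := by
        simpa using hlim0.const_sub 1
      refine tendsto_of_tendsto_of_tendsto_of_le_of_le' hl tendsto_const_nhds ?_
        (Eventually.of_forall fun k => distFreq_le_one' _ _ _ _ _)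
      have hs : Tendsto (fun k : ℕ => |s - t| * (2 * (1 / ((k : ℝ) + 1)))) atTop (𝓝 0) := by
        simpa using (hlim0.const_mul 2).const_mul |s - t|
      filter_upwards [hs.eventually (gt_mem_nhds hτ)] with k hk
      unfold distFreq
      refine le_freq _ (b k) k (by have := hb k; omega) ?_
      intro i h1 h2
      rw [hd]
      refine lt_of_le_of_lt ?_ hk
      have := hsmall k i h1 h2
      rw [mul_one_div]
      gcongr
    · refine liminf_eq_zero_of_seq _ (distFreq_le_one' _ _ _ _) (distFreq_nonneg' _ _ _ _)
        (fun k => (k + 1) * a k) (htop a ha) ?_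
      refine squeeze_zero (fun k => distFreq_nonneg' _ _ _ _ _) (fun k => ?_) hlim0
      unfold distFreq
      refine freq_le _ (a k) k (by have := ha k; omega) ?_
      intro i h1 h2
      rw [hd, not_lt]
      have := hbig k i h1 h2
      gcongr

lemma not_chaotic_id {X : Type*} [MetricSpace X] : ¬ DistributionallyChaotic (fun x : X => x) := by
  rintro ⟨Λ, hΛ, h⟩
  apply hΛ
  apply Set.Subsingleton.countable
  intro x hx y hy
  by_contra hxy
  have h1 := (h x hx y hy hxy).1 (dist x y) (dist_pos.mpr hxy)
  have h2 : distFreq (fun x : X => x) x y (dist x y) = fun _ => 0 := by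
    ext n
    have hid : (fun x : X => x) = id := rfl
    simp [distFreq, hid]
  rw [h2] at h1
  simp at h1

/-! ### Parameters -/

/-- peak times -/
def pA (C : ℕ) : ℕ → ℕ
  | 0 => C
  | j + 1 => 2 ^ (j + 1) * (j + 1) *
      (2 ^ (j + 1) * C + 2 * (j + 1) * (24 * (j + 1) ^ 3 * 2 ^ j * pA C j))

/-- rest times -/
def pB (C k : ℕ) : ℕ := 24 * (k + 1) ^ 3 * 2 ^ k * pA C k

lemma pA_succ (C j : ℕ) : pA C (j + 1) = 2 ^ (j + 1) * (j + 1) *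
      (2 ^ (j + 1) * C + 2 * (j + 1) * pB C j) := rfl

lemma pA_ge (C j : ℕ) : 2 ^ j * (2 ^ j * C) ≤ pA C j := by
  cases j with
  | zero => simp [pA]
  | succ j =>
    rw [pA_succ]
    apply Nat.mul_le_mul
    · exact Nat.le_mul_of_pos_right _ (by omega)
    · omega

lemma pA_ge' (C j : ℕ) : 2 ^ j * C ≤ pA C j :=
  le_trans (Nat.le_mul_of_pos_left _ (by positivity)) (pA_ge C j)

lemma pA_lt (C j : ℕ) (hC : 0 < C) : j < pA C j :=
  lt_of_lt_of_le Nat.lt_two_pow_self (le_trans (Nat.le_mul_of_pos_right _ hC) (pA_ge' C j))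

lemma pA_le_pB (C j : ℕ) : pA C j ≤ pB C j := Nat.le_mul_of_pos_left _ (by positivity)

lemma pB_le_pA (C j : ℕ) : pB C j ≤ pA C (j + 1) := by
  rw [pA_succ]
  calc pB C j ≤ 2 * (j + 1) * pB C j := Nat.le_mul_of_pos_left _ (by positivity)
    _ ≤ 2 ^ (j + 1) * C + 2 * (j + 1) * pB C j := by omega
    _ ≤ _ := Nat.le_mul_of_pos_left _ (by positivity)

lemma pA_mono (C : ℕ) : Monotone (pA C) :=
  monotone_nat_of_le_succ fun j => (pA_le_pB C j).trans (pB_le_pA C j)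

lemma pB_mono (C : ℕ) : Monotone (pB C) :=
  monotone_nat_of_le_succ fun j => (pB_le_pA C j).trans (pA_le_pB C _)

/-- decay parameter -/
noncomputable def pd (C j : ℕ) : ℝ := 1 / (2 * ((j : ℝ) + 1) * pA C j)

/-- off-diagonal entry -/
noncomputable def pe (C j : ℕ) : ℝ := 1 / (2 ^ j * (C : ℝ))

/-- coordinates of the irregular vector -/
noncomputable def pv (C j : ℕ) : ℝ := 2 ^ j * (C : ℝ) / pA C j




lemma pA_pos {C : ℕ} (hC : 0 < C) (j : ℕ) : (0 : ℝ) < pA C j := by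
  have := pA_lt C j hC
  exact_mod_cast (by omega : 0 < pA C j)

lemma pA_one {C : ℕ} (hC : 0 < C) (j : ℕ) : (1 : ℝ) ≤ pA C j := by
  have := pA_lt C j hC
  exact_mod_cast (by omega : 1 ≤ pA C j)



lemma pB_ge (C k : ℕ) : 2 ^ k * C ≤ pB C k := (pA_ge' C k).trans (pA_le_pB C k)

lemma pd_pos {C : ℕ} (hC : 0 < C) (j : ℕ) : 0 < pd C j := by
  have := pA_pos hC j
  unfold pd; positivity

lemma pd_le {C : ℕ} (hC : 0 < C) (j : ℕ) : pd C j ≤ 1 / 2 := by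
  have := pA_one hC j
  unfold pd
  apply one_div_le_one_div_of_le (by norm_num)
  have : (0 : ℝ) ≤ j := by positivity
  nlinarith

lemma pd_le_pe {C : ℕ} (hC : 0 < C) (j : ℕ) : 2 * pd C j ≤ pe C j := by
  have h := pA_pos hC j
  have hC' : (0 : ℝ) < C := by exact_mod_cast hC
  have h2 : (2 : ℝ) ^ j * C ≤ pA C j := by exact_mod_cast pA_ge' C j
  have : (0 : ℝ) ≤ j := by positivity
  unfold pd pe
  rw [mul_one_div, div_le_div_iff₀ (by positivity) (by positivity)]
  nlinarith

lemma pe_pos {C : ℕ} (hC : 0 < C) (j : ℕ) : 0 < pe C j := by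
  have hC' : (0 : ℝ) < C := by exact_mod_cast hC
  unfold pe; positivity

lemma pv_pos {C : ℕ} (hC : 0 < C) (j : ℕ) : 0 < pv C j := by
  have := pA_pos hC j
  have hC' : (0 : ℝ) < C := by exact_mod_cast hC
  unfold pv; positivity

lemma pv_le {C : ℕ} (hC : 0 < C) (j : ℕ) : pv C j ≤ (1 / 2) ^ j := by
  have h := pA_pos hC j
  have h2 : (2 : ℝ) ^ j * (2 ^ j * C) ≤ pA C j := by exact_mod_cast pA_ge C j
  unfold pv
  rw [one_div_pow, div_le_div_iff₀ h (by positivity)]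
  nlinarith

lemma pv_mul_pe {C : ℕ} (hC : 0 < C) (j : ℕ) : pv C j * pe C j = 1 / pA C j := by
  have h := pA_pos hC j
  have hC' : (0 : ℝ) < C := by exact_mod_cast hC
  unfold pv pe
  field_simp

/-- norm bound of the `j`-th block at time `n` -/
noncomputable def pt (C j n : ℕ) : ℝ :=
  pv C j * ((1 - pd C j) ^ n + n * pe C j * (1 - pd C j) ^ (n - 1))

lemma pt_le {C : ℕ} (hC : 0 < C) (j n : ℕ) :
    pt C j n ≤ (1 - pd C j) ^ n * ((2 ^ j * C + 2 * n) / pA C j) := by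
  have h := pA_pos hC j
  have hd := pd_le hC j
  have h1 : pt C j n = (1 - pd C j) ^ n * pv C j
      + n * (1 - pd C j) ^ (n - 1) * (pv C j * pe C j) := by unfold pt; ring
  have h2 : n * (1 - pd C j) ^ (n - 1) ≤ 2 * n * (1 - pd C j) ^ n := by
    cases n with
    | zero => simp
    | succ n =>
      simp only [Nat.add_sub_cancel]
      rw [pow_succ]
      have : 0 ≤ ((n + 1 : ℕ) : ℝ) * (1 - pd C j) ^ n := by
        apply mul_nonneg (by positivity)
        apply pow_nonneg; linarith
      nlinarith
  rw [h1, pv_mul_pe hC, add_div, mul_add]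
  unfold pv
  have : n * (1 - pd C j) ^ (n - 1) * (1 / (pA C j : ℝ))
      ≤ 2 * n * (1 - pd C j) ^ n * (1 / (pA C j : ℝ)) := by gcongr
  have e : (1 - pd C j) ^ n * (2 * n / (pA C j : ℝ))
      = 2 * n * (1 - pd C j) ^ n * (1 / (pA C j : ℝ)) := by ring
  linarith

lemma pow_decay {d : ℝ} (hd : 0 < d) (hd' : d ≤ 1 / 2) {n : ℕ} (hn : 0 < n) :
    (1 - d) ^ n ≤ 2 / (n * d) ^ 2 := by
  have hn' : (0 : ℝ) < n := by exact_mod_cast hn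
  have h1 : (1 - d) ^ n ≤ Real.exp (-(n * d)) := by
    calc (1 - d) ^ n ≤ (Real.exp (-d)) ^ n := by
          apply pow_le_pow_left₀ (by linarith) (Real.one_sub_le_exp_neg d)
      _ = _ := by rw [← Real.exp_nat_mul]; congr 1; ring
  have h2 := Real.quadratic_le_exp_of_nonneg (x := n * d) (by positivity)
  refine h1.trans ?_
  rw [Real.exp_neg, inv_eq_one_div, div_le_div_iff₀ (Real.exp_pos _) (by positivity)]
  have : 0 < n * d := by positivity
  linarith

lemma pt_small {C : ℕ} (hC : 0 < C) (k n : ℕ) (h1 : pB C k ≤ n) (h2 : n < (k + 1) * pB C k)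
    (j : ℕ) : pt C j n ≤ 1 / ((k : ℝ) + 1) * (1 / 2) ^ j := by
  have hA := pA_pos hC j
  have hC' : (0 : ℝ) < C := by exact_mod_cast hC
  have hd := pd_le hC j
  have hd0 := pd_pos hC j
  refine (pt_le hC j n).trans ?_
  rcases le_or_gt j k with hjk | hjk
  · have hn : 0 < n := by
      have := pA_lt C k hC
      have := pA_le_pB C k
      omega
    have hn' : (0 : ℝ) < n := by exact_mod_cast hn
    have h3 : (2 : ℝ) ^ j * C ≤ n := by
      have : 2 ^ j * C ≤ n := (Nat.mul_le_mul_right C (Nat.pow_le_pow_right (by norm_num) hjk)).trans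
        ((pB_ge C k).trans h1)
      exact_mod_cast this
    have hAk : (pA C j : ℝ) ≤ pA C k := by exact_mod_cast pA_mono C hjk
    have hjk' : (j : ℝ) ≤ k := by exact_mod_cast hjk
    have hB : (24 * (k + 1) ^ 3 * 2 ^ k * pA C k : ℝ) ≤ n := by
      have : 24 * (k + 1) ^ 3 * 2 ^ k * pA C k ≤ n := h1
      exact_mod_cast this
    calc (1 - pd C j) ^ n * ((2 ^ j * C + 2 * n) / pA C j)
        ≤ 2 / (n * pd C j) ^ 2 * ((n + 2 * n) / pA C j) := by
          have := pow_decay hd0 hd hn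
          gcongr
      _ = 24 * ((j : ℝ) + 1) ^ 2 * pA C j / n := by
          unfold pd
          field_simp
          ring
      _ ≤ 24 * ((k : ℝ) + 1) ^ 2 * pA C k / (24 * (k + 1) ^ 3 * 2 ^ k * pA C k) := by
          have := pA_pos hC k
          gcongr
      _ = 1 / ((k : ℝ) + 1) * (1 / 2) ^ k := by
          have := pA_pos hC k
          rw [one_div_pow]
          field_simp
      _ ≤ 1 / ((k : ℝ) + 1) * (1 / 2) ^ j := by
          gcongr 1 / ((k : ℝ) + 1) * ?_
          exact pow_le_pow_of_le_one (by norm_num) (by norm_num) hjk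
  · obtain ⟨i, rfl⟩ : ∃ i, j = i + 1 := ⟨j - 1, by omega⟩
    have hki : k ≤ i := by omega
    have hki' : (k : ℝ) ≤ i := by exact_mod_cast hki
    have hn : n ≤ (i + 1) * pB C i := h2.le.trans (Nat.mul_le_mul (by omega) (pB_mono C hki))
    have hn' : (n : ℝ) ≤ ((i : ℝ) + 1) * pB C i := by exact_mod_cast hn
    have hp : (1 - pd C (i + 1)) ^ n ≤ 1 := pow_le_one₀ (by linarith) (by linarith)
    have hAe : (pA C (i + 1) : ℝ) = 2 ^ (i + 1) * (i + 1) *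
      (2 ^ (i + 1) * C + 2 * (i + 1) * pB C i) := by rw [pA_succ]; push_cast; ring
    calc (1 - pd C (i + 1)) ^ n * ((2 ^ (i + 1) * C + 2 * n) / pA C (i + 1))
        ≤ 1 * ((2 ^ (i + 1) * C + 2 * (((i : ℝ) + 1) * pB C i)) / pA C (i + 1)) := by gcongr
      _ = 1 / ((i : ℝ) + 1) * (1 / 2) ^ (i + 1) := by
          have : (0 : ℝ) < 2 ^ (i + 1) * C + 2 * (i + 1) * pB C i := by positivity
          rw [hAe, one_div_pow, one_mul, show (2 ^ (i + 1) * C + 2 * (((i : ℝ) + 1) * pB C i) : ℝ)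
            = 2 ^ (i + 1) * C + 2 * (i + 1) * pB C i by ring]
          generalize (2 ^ (i + 1) * C + 2 * (i + 1) * pB C i : ℝ) = q at *
          field_simp
      _ ≤ _ := by gcongr

lemma pt_big {C : ℕ} (hC : 0 < C) (k n : ℕ) (h1 : pA C k ≤ n) (h2 : n < (k + 1) * pA C k) :
    1 / 2 ≤ pv C k * (n * pe C k * (1 - pd C k) ^ (n - 1)) := by
  have hA := pA_pos hC k
  have hd := pd_le hC k
  have hd0 := pd_pos hC k
  have h1' : (pA C k : ℝ) ≤ n := by exact_mod_cast h1
  have h2' : (n : ℝ) ≤ (k + 1) * pA C k := by exact_mod_cast h2.le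
  have hb : 1 / 2 ≤ (1 - pd C k) ^ (n - 1) := by
    have h3 : (1 - pd C k) ^ n ≤ (1 - pd C k) ^ (n - 1) :=
      pow_le_pow_of_le_one (by linarith) (by linarith) (by omega)
    have h4 := one_add_mul_le_pow (a := - pd C k) (by linarith) n
    have h5 : n * pd C k ≤ 1 / 2 := by
      unfold pd
      rw [mul_one_div, div_le_div_iff₀ (by positivity) (by positivity)]
      linarith
    rw [← sub_eq_add_neg] at h4
    linarith
  have e : pv C k * (n * pe C k * (1 - pd C k) ^ (n - 1))
      = (n / pA C k) * (1 - pd C k) ^ (n - 1) := by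
    rw [show pv C k * (n * pe C k * (1 - pd C k) ^ (n - 1))
      = n * (pv C k * pe C k) * (1 - pd C k) ^ (n - 1) by ring, pv_mul_pe hC]; ring
  rw [e]
  have : 1 ≤ (n / pA C k : ℝ) := (one_le_div hA).mpr h1'
  nlinarith

/-! ### The operator -/

open InnerProductSpace in
lemma isCompact_rankOne {H : Type*} [NormedAddCommGroup H] [InnerProductSpace ℂ H] (x y : H) :
    IsCompactOperator (rankOne ℂ x y : H →L[ℂ] H) := by
  have h0 : IsCompactOperator (id : ℂ → ℂ) := 
    (isCompactOperator_id_iff_finiteDimensional (𝕜 := ℂ)).mpr inferInstance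
  rw [rankOne_def']
  exact (h0.comp_clm (innerSL ℂ y)).clm_comp (ContinuousLinearMap.toSpanSingleton ℂ x)

section operator
open InnerProductSpace

/-- the blocks of the perturbation -/
noncomputable def blk {H : Type*} [NormedAddCommGroup H] [InnerProductSpace ℂ H]
    (e f : ℕ → H) (C m : ℕ) : H →L[ℂ] H :=
  (pe C m : ℂ) • rankOne ℂ (e m) (f m) - (pd C m : ℂ) • (rankOne ℂ (e m) (e m)
    + rankOne ℂ (f m) (f m))

lemma isCompact_blk {H : Type*} [NormedAddCommGroup H] [InnerProductSpace ℂ H]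
    (e f : ℕ → H) (C m : ℕ) : IsCompactOperator (blk e f C m) :=
  ((isCompact_rankOne _ _).smul _).sub (((isCompact_rankOne _ _).add (isCompact_rankOne _ _)).smul _)

lemma norm_blk {H : Type*} [NormedAddCommGroup H] [InnerProductSpace ℂ H]
    (e f : ℕ → H) (he : ∀ m, ‖e m‖ = 1) (hf : ∀ m, ‖f m‖ = 1) {C : ℕ} (hC : 0 < C) (m : ℕ) :
    ‖blk e f C m‖ ≤ 2 / C * (1 / 2) ^ m := by
  have hC' : (0 : ℝ) < C := by exact_mod_cast hC
  have h1 := pd_le_pe hC m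
  have h2 := pd_pos hC m
  have h3 := pe_pos hC m
  have h4 : 2 / (C : ℝ) * (1 / 2) ^ m = 2 * pe C m := by
    unfold pe; rw [one_div_pow]; field_simp
  unfold blk
  refine (norm_sub_le _ _).trans ?_
  rw [norm_smul, norm_smul, norm_rankOne, he, hf, Complex.norm_real, Complex.norm_real,
    Real.norm_of_nonneg h2.le, Real.norm_of_nonneg h3.le]
  have h5 : ‖rankOne ℂ (e m) (e m) + rankOne ℂ (f m) (f m)‖ ≤ 2 := by
    refine (norm_add_le _ _).trans ?_
    rw [norm_rankOne, norm_rankOne, he, hf]; norm_num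
  nlinarith

lemma summable_geo (c : ℝ) : Summable (fun m : ℕ => c * (1 / 2 : ℝ) ^ m) :=
  summable_geometric_two.mul_left c

lemma hasSum_geo (c : ℝ) : HasSum (fun m : ℕ => c * (1 / 2 : ℝ) ^ m) (c * 2) :=
  hasSum_geometric_two.mul_left c

lemma main_construction {H : Type*} [NormedAddCommGroup H] [InnerProductSpace ℂ H]
    [CompleteSpace H] (e f : ℕ → H) (he : Orthonormal ℂ e) (hf : Orthonormal ℂ f)
    (hef : ∀ i j, inner ℂ (e i) (f j) = 0) (C : ℕ) (hC : 0 < C) :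
    ∃ K : H →L[ℂ] H, IsCompactOperator K ∧ ‖K‖ ≤ 4 / C ∧
      DistributionallyChaotic (fun x => (1 + K : H →L[ℂ] H) x) := by
  have hfe : ∀ i j, inner ℂ (f i) (e j) = 0 := fun i j => by
    rw [← inner_conj_symm, hef, map_zero]
  have hee := orthonormal_iff_ite.mp he
  have hff := orthonormal_iff_ite.mp hf
  have hnb := norm_blk e f he.1 hf.1 hC
  have hsum : Summable (blk e f C) := Summable.of_norm_bounded (summable_geo _) hnb
  set K := ∑' m, blk e f C m with hK
  have hKx : ∀ z, K z = ∑' m, blk e f C m z := fun z =>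
    ((ContinuousLinearMap.apply ℂ H z).hasSum hsum.hasSum).tsum_eq.symm
  have hKe : ∀ j, K (e j) = -(pd C j : ℂ) • e j := by
    intro j
    rw [hKx, tsum_eq_single j]
    · simp [blk, he.1, hf.1, hfe, hef]
    · intro m hm
      simp [blk, hee, hff, hfe, hef, hm]
  have hKf : ∀ j, K (f j) = (pe C j : ℂ) • e j - (pd C j : ℂ) • f j := by
    intro j
    rw [hKx, tsum_eq_single j]
    · simp [blk, he.1, hf.1, hfe, hef]
    · intro m hm
      simp [blk, hee, hff, hfe, hef, hm]
  have hnK : ‖K‖ ≤ 4 / C := by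
    refine (tsum_of_norm_bounded (hasSum_geo _) hnb).trans (le_of_eq ?_)
    ring
  have hcK : IsCompactOperator K := by
    refine isCompactOperator_of_tendsto hsum.hasSum.tendsto_sum_nat (Eventually.of_forall fun N => ?_)
    induction N with
    | zero => simpa using isCompactOperator_zero
    | succ N ih =>
      rw [Finset.sum_range_succ]
      exact ih.add (isCompact_blk e f C N)
  refine ⟨K, hcK, hnK, ?_⟩
  set T : H →L[ℂ] H := 1 + K with hT
  have hTe : ∀ j, T (e j) = ((1 - pd C j : ℝ) : ℂ) • e j := by
    intro j
    simp only [hT, add_apply, one_apply_eq_self, hKe]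
    push_cast
    module
  have hTf : ∀ j, T (f j) = ((1 - pd C j : ℝ) : ℂ) • f j + (pe C j : ℂ) • e j := by
    intro j
    simp only [hT, add_apply, one_apply_eq_self, hKf]
    push_cast
    module
  have hTn : ∀ (n j : ℕ), (T ^ n) (f j) = (((1 - pd C j) ^ n : ℝ) : ℂ) • f j
      + ((n * pe C j * (1 - pd C j) ^ (n - 1) : ℝ) : ℂ) • e j := by
    intro n j
    induction n with
    | zero => simp
    | succ n ih =>
      rw [pow_succ', mul_apply_eq_comp, ih, map_add, map_smul, map_smul, hTe, hTf]
      cases n with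
      | zero => simp
      | succ n =>
        simp only [Nat.add_sub_cancel]
        push_cast
        module
  have hv := pv_pos hC
  have hxs : Summable (fun j => (pv C j : ℂ) • f j) := by
    refine Summable.of_norm_bounded summable_geometric_two (fun j => ?_)
    rw [norm_smul, hf.1, mul_one, Complex.norm_real, Real.norm_of_nonneg (hv j).le]
    exact pv_le hC j
  set x := ∑' j, (pv C j : ℂ) • f j with hx
  have hTx : ∀ n, HasSum (fun j => (T ^ n) ((pv C j : ℂ) • f j)) ((T ^ n) x) := fun n =>
    (T ^ n).hasSum hxs.hasSum
  refine chaotic_of_vector T x (1 / 2) (by norm_num) (pA C) (pB C) (fun k => pA_lt C k hC)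
    (fun k => (pA_lt C k hC).trans_le (pA_le_pB C k)) ?_ ?_
  · intro k n h1 h2
    have h3 : inner ℂ (e k) ((T ^ n) x)
        = ((pv C k * (n * pe C k * (1 - pd C k) ^ (n - 1)) : ℝ) : ℂ) := by
      have h4 := (innerSL ℂ (e k)).hasSum (hTx n)
      refine h4.unique ?_
      convert hasSum_ite_eq k _ using 2 with j
      simp only [innerSL_apply_apply, map_smul, hTn, inner_smul_right, inner_add_right, hef, hee]
      by_cases hjk : j = k
      · subst hjk; simp
      · simp [hjk, Ne.symm hjk]
    have h5 := norm_inner_le_norm (𝕜 := ℂ) (e k) ((T ^ n) x)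
    rw [he.1, one_mul, h3, Complex.norm_real] at h5
    exact (pt_big hC k n h1 h2).trans ((le_abs_self _).trans h5)
  · intro k n h1 h2
    have h3 : ∀ j, ‖(T ^ n) ((pv C j : ℂ) • f j)‖ ≤ 1 / ((k : ℝ) + 1) * (1 / 2) ^ j := by
      intro j
      refine le_trans ?_ (pt_small hC k n h1 h2 j)
      have hd := pd_le hC j
      have hp := pe_pos hC j
      have hq : 0 ≤ 1 - pd C j := by linarith
      rw [map_smul, norm_smul, hTn, Complex.norm_real, Real.norm_of_nonneg (hv j).le]
      unfold pt
      have := hv j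
      gcongr
      refine (norm_add_le _ _).trans ?_
      rw [norm_smul, norm_smul, he.1, hf.1, Complex.norm_real, Complex.norm_real,
        Real.norm_of_nonneg (by positivity), Real.norm_of_nonneg (by positivity)]
      simp
    rw [← (hTx n).tsum_eq]
    refine (tsum_of_norm_bounded (hasSum_geo _) h3).trans (le_of_eq ?_)
    ring

end operator

/-- For every ε > 0 there are a bounded operator T on a separable
complex Hilbert space and a compact operator K with ‖K‖ < ε such that T is
distributionally chaotic but T - K is not: distributional chaos is not
preserved under compact perturbations. -/
theorem stmt_18 (ε : ℝ) (hε : 0 < ε) :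
    ∃ (H : Type) (_ : NormedAddCommGroup H) (_ : InnerProductSpace ℂ H),
      CompleteSpace H ∧ TopologicalSpace.SeparableSpace H ∧
      ∃ T K : H →L[ℂ] H,
        IsCompactOperator (⇑K) ∧ ‖K‖ < ε ∧
        DistributionallyChaotic (fun x => T x) ∧
        ¬ DistributionallyChaotic (fun x => (T - K) x) := by
  let H := lp (fun _ : ℕ × Bool => ℂ) 2
  let b : HilbertBasis (ℕ × Bool) ℂ H := HilbertBasis.ofRepr (LinearIsometryEquiv.refl ℂ _)
  obtain ⟨C, hCε⟩ := exists_nat_gt (4 / ε)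
  have hC' : (0 : ℝ) < C := lt_trans (by positivity) hCε
  have hC : 0 < C := by exact_mod_cast hC'
  have hbo := b.orthonormal
  obtain ⟨K, hK1, hK2, hK3⟩ := main_construction (fun m => b (m, false)) (fun m => b (m, true))
    (hbo.comp (fun m : ℕ => (m, false)) (fun i j h => by simpa using h))
    (hbo.comp (fun m : ℕ => (m, true)) (fun i j h => by simpa using h))
    (fun i j => hbo.2 (by simp)) C hC
  refine ⟨H, inferInstance, inferInstance, inferInstance, ?_, 1 + K, K, hK1, ?_, hK3, ?_⟩
  · have h1 : TopologicalSpace.IsSeparable (Set.range b) := (Set.countable_range b).isSeparable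
    have h2 := (h1.span (R := ℂ)).closure
    have h3 := b.dense_span
    rw [← TopologicalSpace.isSeparable_univ_iff]
    have h4 : closure (Submodule.span ℂ (Set.range b) : Set H) = Set.univ := by
      rw [← Submodule.topologicalClosure_coe, h3]; rfl
    rwa [h4] at h2
  · refine lt_of_le_of_lt hK2 ?_
    rw [div_lt_iff₀ hC']
    rw [div_lt_iff₀ hε] at hCε
    linarith
  · rw [add_sub_cancel_right]
    exact not_chaotic_id
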